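/- arXiv:2308.04475 — 6 statements merged into one kernel-verified Lean document; each statement's English description precedes it below -/
import Mathlib

section
/- Let G be a finite simple graph with m edges and adjacency matrix A (over the reals). Let s⁺ and s⁻ denote the sum of the squares of the positive and of the negative eigenvalues of A, respectively, and let χvec(G) be the vector chromatic number of G, defined as the supremum of ⟨J, Z⟩ over all real symmetric matrices Z indexed by the vertices of G that are entrywise nonnegative, positive semidefinite, have trace equal to 1, and satisfy Z_{uv} = 0 for every pair of distinct non-adjacent vertices u, v. Then min{s⁺, s⁻} ≥ 2m / χvec(G). -/
open Matrix Finset BigOperators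

/-- The Frobenius (trace) inner product of two real matrices. -/
noncomputable def frob {n : ℕ} (M N : Matrix (Fin n) (Fin n) ℝ) : ℝ :=
  ∑ u, ∑ v, M u v * N u v

/-- The all-ones matrix. -/
noncomputable def matJ (n : ℕ) : Matrix (Fin n) (Fin n) ℝ :=
  Matrix.of fun _ _ => (1 : ℝ)

/-- The vector chromatic number of `G`: the supremum of `⟨J, Z⟩` over all real symmetric,
entrywise nonnegative, positive semidefinite matrices `Z` with trace `1` whose entries vanish
on distinct non-adjacent pairs of vertices. -/
noncomputable def chiVec {n : ℕ} (G : SimpleGraph (Fin n)) [DecidableRel G.Adj] : ℝ :=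
  sSup { x : ℝ | ∃ Z : Matrix (Fin n) (Fin n) ℝ,
    Z.IsSymm ∧ (∀ u v, 0 ≤ Z u v) ∧ Z.PosSemidef ∧ Z.trace = 1 ∧
    (∀ u v, u ≠ v → ¬ G.Adj u v → Z u v = 0) ∧ x = frob (matJ n) Z }

/-- The adjacency matrix of a graph is hermitian (it is real symmetric). -/
theorem adjHerm {n : ℕ} (G : SimpleGraph (Fin n)) [DecidableRel G.Adj] :
    (G.adjMatrix ℝ).IsHermitian :=
  (Matrix.conjTranspose_eq_transpose_of_trivial _).trans G.isSymm_adjMatrix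

/-- `s⁺`: the sum of the squares of the positive eigenvalues of the adjacency matrix,
counted with multiplicity. -/
noncomputable def sPlus {n : ℕ} (G : SimpleGraph (Fin n)) [DecidableRel G.Adj] : ℝ :=
  ∑ i, if 0 < (adjHerm G).eigenvalues i then ((adjHerm G).eigenvalues i) ^ 2 else 0

/-- `s⁻`: the sum of the squares of the negative eigenvalues of the adjacency matrix,
counted with multiplicity. -/
noncomputable def sMinus {n : ℕ} (G : SimpleGraph (Fin n)) [DecidableRel G.Adj] : ℝ :=
  ∑ i, if (adjHerm G).eigenvalues i < 0 then ((adjHerm G).eigenvalues i) ^ 2 else 0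

/-- `A⁺ = Σ_{θ>0} θ E_θ`: the positive part of the adjacency matrix, obtained from its
spectral decomposition. -/
noncomputable def Aplus {n : ℕ} (G : SimpleGraph (Fin n)) [DecidableRel G.Adj] :
    Matrix (Fin n) (Fin n) ℝ :=
  ((adjHerm G).eigenvectorUnitary : Matrix (Fin n) (Fin n) ℝ) *
    diagonal (fun i => if 0 < (adjHerm G).eigenvalues i then (adjHerm G).eigenvalues i else 0) *
    star ((adjHerm G).eigenvectorUnitary : Matrix (Fin n) (Fin n) ℝ)

/-- `A⁻ = -Σ_{λ<0} λ E_λ`: the negative part of the adjacency matrix, obtained from its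
spectral decomposition. -/
noncomputable def Aminus {n : ℕ} (G : SimpleGraph (Fin n)) [DecidableRel G.Adj] :
    Matrix (Fin n) (Fin n) ℝ :=
  ((adjHerm G).eigenvectorUnitary : Matrix (Fin n) (Fin n) ℝ) *
    diagonal (fun i => if (adjHerm G).eigenvalues i < 0 then -(adjHerm G).eigenvalues i else 0) *
    star ((adjHerm G).eigenvectorUnitary : Matrix (Fin n) (Fin n) ℝ)

theorem lapl_psd {n : ℕ} (W : Matrix (Fin n) (Fin n) ℝ) (hs : ∀ u v, W u v = W v u)
    (h0 : ∀ u v, 0 ≤ W u v) :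
    (diagonal (fun u => ∑ w, W u w) - W).PosSemidef := by
  apply Matrix.PosSemidef.of_dotProduct_mulVec_nonneg
  · ext u v
    by_cases h : u = v
    · subst h; simp
    · simp [diagonal, h, Ne.symm h, hs u v]
  · intro x
    have key : star x ⬝ᵥ ((diagonal (fun u => ∑ w, W u w) - W) *ᵥ x)
        = ∑ u, ∑ v, W u v * (x u ^ 2 - x u * x v) := by
      rw [sub_mulVec, dotProduct_sub]
      simp only [dotProduct, mulVec_diagonal, star_trivial]
      simp only [mulVec, dotProduct]
      rw [← Finset.sum_sub_distrib]
      refine Finset.sum_congr rfl fun u _ => ?_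
      rw [Finset.mul_sum, Finset.sum_mul, Finset.mul_sum, ← Finset.sum_sub_distrib]
      refine Finset.sum_congr rfl fun v _ => ?_
      ring
    have key2 : ∑ u, ∑ v, W u v * (x u ^ 2 - x u * x v)
        = ∑ u, ∑ v, W u v * (x v ^ 2 - x u * x v) := by
      rw [Finset.sum_comm]
      refine Finset.sum_congr rfl fun u _ => Finset.sum_congr rfl fun v _ => ?_
      rw [hs v u]; ring
    have key3 : 0 ≤ ∑ u, ∑ v, W u v * (x u - x v) ^ 2 :=
      Finset.sum_nonneg fun u _ => Finset.sum_nonneg fun v _ =>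
        mul_nonneg (h0 u v) (sq_nonneg _)
    have key4 : ∑ u, ∑ v, W u v * (x u - x v) ^ 2 =
        ∑ u, ∑ v, W u v * (x u ^ 2 - x u * x v) + ∑ u, ∑ v, W u v * (x v ^ 2 - x u * x v) := by
      simp only [← Finset.sum_add_distrib]
      refine Finset.sum_congr rfl fun u _ => Finset.sum_congr rfl fun v _ => ?_
      ring
    rw [key]
    linarith

theorem psd_entry {n : ℕ} (Z : Matrix (Fin n) (Fin n) ℝ) (hs : Z.IsSymm) (hZ : Z.PosSemidef)
    (u v : Fin n) : 2 * Z u v ≤ Z u u + Z v v := by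
  have h := hZ.dotProduct_mulVec_nonneg (Pi.single u 1 - Pi.single v 1)
  have h2 := hs.apply u v
  simp [mulVec_sub, sub_dotProduct, dotProduct_sub] at h
  linarith

theorem chi_bdd {n : ℕ} (G : SimpleGraph (Fin n)) :
    BddAbove { x : ℝ | ∃ Z : Matrix (Fin n) (Fin n) ℝ,
    Z.IsSymm ∧ (∀ u v, 0 ≤ Z u v) ∧ Z.PosSemidef ∧ Z.trace = 1 ∧
    (∀ u v, u ≠ v → ¬ G.Adj u v → Z u v = 0) ∧ x = frob (matJ n) Z } := by
  refine ⟨n, ?_⟩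
  rintro x ⟨Z, hs, -, hZ, ht, -, rfl⟩
  have h : ∑ u, ∑ v, 2 * Z u v ≤ ∑ u, ∑ v, (Z u u + Z v v) :=
    Finset.sum_le_sum fun u _ => Finset.sum_le_sum fun v _ => psd_entry Z hs hZ u v
  have h1 : ∑ u, Z u u = 1 := ht
  simp only [Finset.sum_add_distrib, h1, ← Finset.mul_sum] at h
  simp [← Finset.mul_sum, h1] at h
  simp only [frob, matJ, of_apply, one_mul]
  linarith

theorem core {n : ℕ} (G : SimpleGraph (Fin n)) [DecidableRel G.Adj]
    (P N : Matrix (Fin n) (Fin n) ℝ) (hP : P.PosSemidef) (hN : N.PosSemidef) (ε : ℝ)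
    (hε : ε ^ 2 = 1) (hA : ∀ u v, P u v - N u v = ε * G.adjMatrix ℝ u v)
    (h0 : ∑ u, ∑ v, P u v * N u v = 0) :
    2 * (G.edgeFinset.card : ℝ) / chiVec G ≤ ∑ u, ∑ v, N u v * N u v := by
  set A := G.adjMatrix ℝ with hAdef
  have hA2 : ∀ u v, A u v * A u v = A u v := fun u v => by
    simp only [hAdef, SimpleGraph.adjMatrix_apply]; split_ifs <;> simp
  have hA0 : ∀ u v, 0 ≤ A u v := fun u v => by
    simp only [hAdef, SimpleGraph.adjMatrix_apply]; split_ifs <;> simp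
  have hA1 : ∀ u v, 0 ≤ 1 - A u v := fun u v => by
    simp only [hAdef, SimpleGraph.adjMatrix_apply]; split_ifs <;> simp
  have hAd : ∀ u, A u u = 0 := fun u => by simp [hAdef]
  have hAs : ∀ u v, A u v = A v u := fun u v => by
    simp [hAdef, SimpleGraph.adjMatrix_apply, G.adj_comm]
  have hPs : ∀ u v, P u v = P v u := fun u v => by simpa using (hP.1.apply u v).symm
  have hm : 2 * (G.edgeFinset.card : ℝ) = ∑ u, ∑ v, A u v := by
    have := G.sum_degrees_eq_twice_card_edges
    have h2 : ((∑ v, G.degree v : ℕ) : ℝ) = 2 * (G.edgeFinset.card : ℝ) := by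
      rw [this]; push_cast; rfl
    rw [← h2]; push_cast
    refine Finset.sum_congr rfl fun u _ => ?_
    simp [hAdef, SimpleGraph.adjMatrix_apply, SimpleGraph.card_neighborFinset_eq_degree,
      ← SimpleGraph.neighborFinset_eq_filter]
  rw [hm]
  set M := ∑ u, ∑ v, A u v with hM
  set q := ∑ u, ∑ v, N u v * N u v with hq
  set p := ∑ u, ∑ v, P u v * P u v with hp
  set e := ∑ u, ∑ v, A u v * (P u v * P u v) with he
  set T := ∑ u, ∑ v, (1 - A u v) * (P u v * P u v) with hT
  have hq0 : 0 ≤ q := Finset.sum_nonneg fun u _ => Finset.sum_nonneg fun v _ => mul_self_nonneg _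
  have hM0 : 0 ≤ M := Finset.sum_nonneg fun u _ => Finset.sum_nonneg fun v _ => hA0 u v
  rcases hM0.eq_or_lt with hMz | hMpos
  · rw [← hMz]; simpa using hq0
  have hTe : T = p - e := by
    simp only [hT, hp, he, ← Finset.sum_sub_distrib]
    refine Finset.sum_congr rfl fun u _ => Finset.sum_congr rfl fun v _ => ?_
    ring
  have hMpq : M = p + q := by
    have : M = p + q - 2 * ∑ u, ∑ v, P u v * N u v := by
      simp only [hM, hp, hq, Finset.mul_sum, ← Finset.sum_sub_distrib, ← Finset.sum_add_distrib]
      refine Finset.sum_congr rfl fun u _ => Finset.sum_congr rfl fun v _ => ?_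
      have h1 := hA u v
      have h2 := hA2 u v
      calc A u v = ε ^ 2 * (A u v * A u v) := by rw [hε, h2, one_mul]
        _ = (ε * A u v) * (ε * A u v) := by ring
        _ = _ := by rw [← h1]; ring
    rw [this, h0]; ring
  have hAP : ∑ u, ∑ v, A u v * P u v = ε * p := by
    have : ∑ u, ∑ v, A u v * P u v = ε * (p - ∑ u, ∑ v, P u v * N u v) := by
      simp only [hp, ← Finset.sum_sub_distrib, Finset.mul_sum]
      refine Finset.sum_congr rfl fun u _ => Finset.sum_congr rfl fun v _ => ?_
      have h1 := hA u v
      calc A u v * P u v = ε ^ 2 * (A u v * P u v) := by rw [hε, one_mul]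
        _ = ε * ((ε * A u v) * P u v) := by ring
        _ = _ := by rw [← h1]; ring
    rw [this, h0]; ring
  have hCS : p ^ 2 ≤ M * e := by
    have h1 : 0 ≤ ∑ u, ∑ v, A u v * (M * P u v - ε * p) ^ 2 :=
      Finset.sum_nonneg fun u _ => Finset.sum_nonneg fun v _ =>
        mul_nonneg (hA0 u v) (sq_nonneg _)
    have h2 : ∑ u, ∑ v, A u v * (M * P u v - ε * p) ^ 2
        = M ^ 2 * e - 2 * M * (ε * p) * (∑ u, ∑ v, A u v * P u v)
          + (ε * p) ^ 2 * ∑ u, ∑ v, A u v := by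
      simp only [he, Finset.mul_sum, ← Finset.sum_sub_distrib, ← Finset.sum_add_distrib]
      refine Finset.sum_congr rfl fun u _ => Finset.sum_congr rfl fun v _ => ?_
      ring
    rw [hAP, ← hM] at h2
    have h3 : M ^ 2 * e - 2 * M * (ε * p) * (ε * p) + (ε * p) ^ 2 * M = M * (M * e - p ^ 2) := by
      have : M ^ 2 * e - 2 * M * (ε * p) * (ε * p) + (ε * p) ^ 2 * M
        = M * (M * e - ε ^ 2 * p ^ 2) := by ring
      rw [this, hε, one_mul]
    rw [h2, h3] at h1
    linarith [nonneg_of_mul_nonneg_right h1 hMpos]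
  have hMT : M * T ≤ p * q := by
    rw [hTe]
    have : M * p = p ^ 2 + p * q := by rw [hMpq]; ring
    linarith
  have hW0 : ∀ u v, 0 ≤ (1 - A u v) * (P u v * P u v) := fun u v =>
    mul_nonneg (hA1 u v) (mul_self_nonneg _)
  have hT0 : 0 ≤ T := Finset.sum_nonneg fun u _ => Finset.sum_nonneg fun v _ => hW0 u v
  have hTpos : 0 < T := by
    refine hT0.lt_of_ne fun hTz => ?_
    have hd : ∀ u, P u u = 0 := fun u => by
      have h1 := (Finset.sum_eq_zero_iff_of_nonneg (fun u _ =>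
        Finset.sum_nonneg fun v _ => hW0 u v)).1 hTz.symm u (Finset.mem_univ _)
      have h2 := (Finset.sum_eq_zero_iff_of_nonneg (fun v _ => hW0 u v)).1 h1 u (Finset.mem_univ _)
      simpa [hAd u] using h2
    have hdN : ∀ u, N u u = 0 := fun u => by
      have := hA u u
      rw [hd, hAd] at this; linarith
    have hPz : P = 0 := hP.trace_eq_zero_iff.1 (by simp [trace, hd])
    have hNz : N = 0 := hN.trace_eq_zero_iff.1 (by simp [trace, hdN])
    have : M = 0 := by rw [hMpq, hp, hq, hPz, hNz]; simp
    exact hMpos.ne' this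
  set W : Matrix (Fin n) (Fin n) ℝ := of fun u v => (1 - A u v) * (P u v * P u v) with hW
  have hWs : ∀ u v, W u v = W v u := fun u v => by
    simp only [hW, of_apply]; rw [hAs u v, hPs u v]
  set Y : Matrix (Fin n) (Fin n) ℝ := P ⊙ P + (diagonal (fun u => ∑ w, W u w) - W) with hY
  have hYpsd : Y.PosSemidef := (hP.hadamard hP).add (lapl_psd W hWs hW0)
  have hYoff : ∀ u v, u ≠ v → Y u v = A u v * (P u v * P u v) := fun u v h => by
    simp [hY, hW, diagonal, h]; ring
  have hYdiag : ∀ u, Y u u = ∑ w, W u w := fun u => by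
    simp [hY, hW, hAd]
  have hYtr : Y.trace = T := by
    simp only [trace, diag_apply, hYdiag]; rfl
  have hYsum : ∑ u, ∑ v, Y u v = p := by
    simp only [hp]
    refine Finset.sum_congr rfl fun u _ => ?_
    simp only [hY, Matrix.add_apply, Matrix.sub_apply, Finset.sum_add_distrib, Finset.sum_sub_distrib,
      hadamard_apply]
    simp [diagonal]
  have hle : p / T ≤ chiVec G := by
    refine le_csSup (chi_bdd G) ⟨T⁻¹ • Y, ?_, ?_, ?_, ?_, ?_, ?_⟩
    · have := (hYpsd.smul (inv_nonneg.2 hT0)).1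
      rwa [IsHermitian, conjTranspose_eq_transpose_of_trivial] at this
    · intro u v
      rw [Matrix.smul_apply, smul_eq_mul]
      refine mul_nonneg (inv_nonneg.2 hT0) ?_
      by_cases h : u = v
      · subst h; rw [hYdiag]; exact Finset.sum_nonneg fun w _ => hW0 u w
      · rw [hYoff u v h]; exact mul_nonneg (hA0 u v) (mul_self_nonneg _)
    · exact hYpsd.smul (inv_nonneg.2 hT0)
    · rw [trace_smul, hYtr, smul_eq_mul, inv_mul_cancel₀ hTpos.ne']
    · intro u v h hn
      rw [Matrix.smul_apply, hYoff u v h]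
      simp [hAdef, hn]
    · simp only [frob, matJ, of_apply, one_mul, Matrix.smul_apply, smul_eq_mul, ← Finset.mul_sum, hYsum]
      rw [div_eq_mul_inv, mul_comm]
  have hpq : 0 < p * q := lt_of_lt_of_le (mul_pos hMpos hTpos) hMT
  have hp0 : 0 < p := pos_of_mul_pos_left hpq hq0
  have hχ : 0 < chiVec G := lt_of_lt_of_le (div_pos hp0 hTpos) hle
  rw [div_le_iff₀ hχ]
  calc M ≤ p * q / T := by rw [le_div_iff₀ hTpos]; exact hMT
    _ = q * (p / T) := by ring
    _ ≤ q * chiVec G := mul_le_mul_of_nonneg_left hle hq0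

/-- Frobenius products of matrices diagonal in a common orthonormal basis. -/
theorem frob_conj {n : ℕ} (U : Matrix (Fin n) (Fin n) ℝ) (hU : star U * U = 1) (d f : Fin n → ℝ) :
    ∑ u, ∑ v, (U * diagonal d * star U) u v * (U * diagonal f * star U) u v
      = ∑ i, d i * f i := by
  have h1 : ∑ u, ∑ v, (U * diagonal d * star U) u v * (U * diagonal f * star U) u v
      = trace ((U * diagonal d * star U) * (U * diagonal f * star U)ᴴ) := by
    generalize U * diagonal d * star U = X
    generalize U * diagonal f * star U = Y
    simp [trace, mul_apply]
  rw [h1]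
  have h2 : (U * diagonal f * star U)ᴴ = U * diagonal f * star U := by
    simp [star_eq_conjTranspose, Matrix.mul_assoc]
  rw [h2]
  have h3 : (U * diagonal d * star U) * (U * diagonal f * star U)
      = U * (diagonal d * (star U * U) * diagonal f) * star U := by
    simp only [Matrix.mul_assoc]
  rw [h3, hU, Matrix.mul_one, trace_mul_comm, ← Matrix.mul_assoc, hU, Matrix.one_mul,
    diagonal_mul_diagonal, trace_diagonal]

theorem Apm {n : ℕ} (G : SimpleGraph (Fin n)) [DecidableRel G.Adj] :
    Aplus G - Aminus G = G.adjMatrix ℝ := by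
  conv_rhs => rw [(adjHerm G).spectral_theorem, Unitary.conjStarAlgAut_apply]
  rw [Aplus, Aminus, ← Matrix.sub_mul, ← Matrix.mul_sub, diagonal_sub]
  congr 3
  ext i
  simp only [Function.comp, RCLike.ofReal_real_eq_id, id]
  split_ifs <;> linarith

/-- **Theorem 1** (Coutinho–Spier). For every graph `G` with `m` edges,
`min {s⁺, s⁻} ≥ 2m / χvec(G)`. -/
theorem min_sum_squares_ge_two_m_div_chiVec {n : ℕ} (G : SimpleGraph (Fin n))
    [DecidableRel G.Adj] :
    min (sPlus G) (sMinus G) ≥ 2 * (G.edgeFinset.card : ℝ) / chiVec G := by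
  have hU : star ((adjHerm G).eigenvectorUnitary : Matrix (Fin n) (Fin n) ℝ) *
      ((adjHerm G).eigenvectorUnitary : Matrix (Fin n) (Fin n) ℝ) = 1 :=
    Unitary.coe_star_mul_self _
  have hP : (Aplus G).PosSemidef := by
    refine PosSemidef.mul_mul_conjTranspose_same (PosSemidef.diagonal fun i => ?_) _
    dsimp only [Pi.zero_apply]; split_ifs <;> linarith
  have hN : (Aminus G).PosSemidef := by
    refine PosSemidef.mul_mul_conjTranspose_same (PosSemidef.diagonal fun i => ?_) _
    dsimp only [Pi.zero_apply]; split_ifs <;> linarith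
  have hPP : ∑ u, ∑ v, Aplus G u v * Aplus G u v = sPlus G := by
    rw [Aplus, frob_conj _ hU, sPlus]
    refine Finset.sum_congr rfl fun i _ => ?_
    split_ifs <;> ring
  have hNN : ∑ u, ∑ v, Aminus G u v * Aminus G u v = sMinus G := by
    rw [Aminus, frob_conj _ hU, sMinus]
    refine Finset.sum_congr rfl fun i _ => ?_
    split_ifs <;> ring
  have hPN : ∑ u, ∑ v, Aplus G u v * Aminus G u v = 0 := by
    rw [Aplus, Aminus, frob_conj _ hU]
    refine Finset.sum_eq_zero fun i _ => ?_
    split_ifs <;> first | (exfalso; linarith) | simp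
  have hA : ∀ u v, Aplus G u v - Aminus G u v = G.adjMatrix ℝ u v := fun u v => by
    rw [← Apm G, Matrix.sub_apply]
  refine le_min ?_ ?_
  · rw [← hPP]
    refine core G (Aminus G) (Aplus G) hN hP (-1) (by norm_num) (fun u v => ?_) ?_
    · rw [← hA]; ring
    · simpa only [mul_comm] using hPN
  · rw [← hNN]
    exact core G (Aplus G) (Aminus G) hP hN 1 (by norm_num) (fun u v => by rw [hA, one_mul]) hPN
end

section
/- Let G be a finite simple graph with adjacency matrix A (over the reals), and let χvec(G) be the vector chromatic number of G. If Z is a real symmetric matrix indexed by the vertices of G that is entrywise nonnegative and positive semidefinite, then ⟨J, Z⟩ ≤ χvec(G) · ⟨J − A, Z⟩. -/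
open Matrix Finset BigOperators

theorem frob_matJ_eq {n : ℕ} (Z : Matrix (Fin n) (Fin n) ℝ) :
    frob (matJ n) Z = ∑ u, ∑ v, Z u v := by
  simp [frob, matJ]

theorem frob_matJ_le {n : ℕ} (Z : Matrix (Fin n) (Fin n) ℝ) (hsymm : Z.IsSymm)
    (hpsd : Z.PosSemidef) : frob (matJ n) Z ≤ n * Z.trace := by
  have key : ∀ u v, 2 * Z u v ≤ Z u u + Z v v := by
    intro u v
    have h := hpsd.dotProduct_mulVec_nonneg (Pi.single u 1 - Pi.single v 1)
    have hs : Z v u = Z u v := hsymm.apply u v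
    simp [Matrix.mulVec_sub, sub_dotProduct, dotProduct_sub] at h
    linarith
  have h2 : ∑ u, ∑ v, 2 * Z u v ≤ ∑ u : Fin n, ∑ v, (Z u u + Z v v) :=
    Finset.sum_le_sum fun u _ => Finset.sum_le_sum fun v _ => key u v
  rw [frob_matJ_eq]
  simp only [Finset.sum_add_distrib, ← Finset.mul_sum, Finset.sum_const, Finset.card_univ,
    Fintype.card_fin, nsmul_eq_mul] at h2
  simp only [Matrix.trace, Matrix.diag]
  linarith

/-- The weighted Laplacian of a symmetric nonnegative matrix is positive semidefinite. -/
theorem lap_posSemidef {n : ℕ} (N : Matrix (Fin n) (Fin n) ℝ) (hs : N.IsSymm)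
    (hn : ∀ u v, 0 ≤ N u v) : (diagonal (fun u => ∑ v, N u v) - N).PosSemidef := by
  refine Matrix.PosSemidef.of_dotProduct_mulVec_nonneg ?_ ?_
  · rw [Matrix.IsHermitian, Matrix.conjTranspose_eq_transpose_of_trivial, transpose_sub,
      diagonal_transpose, hs.eq]
  · intro x
    have h0 : 0 ≤ ∑ u, ∑ v, N u v * (x u - x v) ^ 2 :=
      Finset.sum_nonneg fun u _ => Finset.sum_nonneg fun v _ =>
        mul_nonneg (hn u v) (sq_nonneg _)
    have h1 : ∑ u, ∑ v, N u v * (x u - x v) ^ 2 =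
        ∑ u, ∑ v, N u v * x u ^ 2 + ∑ u, ∑ v, N u v * x v ^ 2
          - 2 * ∑ u, ∑ v, N u v * x u * x v := by
      simp only [Finset.mul_sum, ← Finset.sum_add_distrib, ← Finset.sum_sub_distrib]
      refine Finset.sum_congr rfl fun u _ => Finset.sum_congr rfl fun v _ => ?_
      ring
    have h2 : ∑ u, ∑ v, N u v * x v ^ 2 = ∑ u, ∑ v, N u v * x u ^ 2 := by
      rw [Finset.sum_comm]
      refine Finset.sum_congr rfl fun u _ => Finset.sum_congr rfl fun v _ => ?_
      rw [hs.apply]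
    have h3 : star x ⬝ᵥ ((diagonal (fun u => ∑ v, N u v) - N) *ᵥ x) =
        ∑ u, ∑ v, N u v * x u ^ 2 - ∑ u, ∑ v, N u v * x u * x v := by
      rw [Matrix.sub_mulVec, dotProduct_sub]
      congr 1
      · simp only [dotProduct, mulVec_diagonal, Pi.star_apply, star_trivial]
        refine Finset.sum_congr rfl fun u _ => ?_
        rw [← Finset.sum_mul]
        ring
      · simp only [dotProduct, mulVec, Pi.star_apply, star_trivial, Finset.mul_sum]
        refine Finset.sum_congr rfl fun u _ => Finset.sum_congr rfl fun v _ => ?_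
        ring
    rw [h3]
    linarith

/-- **Lemma 2**. If `Z` is a real symmetric matrix indexed by the vertices of `G` that is
entrywise nonnegative and positive semidefinite, then `⟨J, Z⟩ ≤ χvec(G) · ⟨J − A, Z⟩`. -/
theorem frob_J_le_chiVec_mul_frob_J_sub_A {n : ℕ} (G : SimpleGraph (Fin n))
    [DecidableRel G.Adj] (Z : Matrix (Fin n) (Fin n) ℝ) (hsymm : Z.IsSymm)
    (hnn : ∀ u v, 0 ≤ Z u v) (hpsd : Z.PosSemidef) :
    frob (matJ n) Z ≤ chiVec G * frob (matJ n - G.adjMatrix ℝ) Z := by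
  classical
  set N : Matrix (Fin n) (Fin n) ℝ :=
    Matrix.of fun u v => if u ≠ v ∧ ¬ G.Adj u v then Z u v else 0 with hN
  have hNs : N.IsSymm := by
    refine Matrix.IsSymm.ext fun u v => ?_
    simp only [hN, Matrix.of_apply, hsymm.apply u v, G.adj_comm v u, ne_comm (a := v) (b := u)]
  have hNn : ∀ u v, 0 ≤ N u v := by
    intro u v
    simp only [hN, Matrix.of_apply]
    split_ifs
    · exact hnn u v
    · exact le_rfl
  set W : Matrix (Fin n) (Fin n) ℝ := Z + (diagonal (fun u => ∑ v, N u v) - N) with hW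
  have hWp : W.PosSemidef := hpsd.add (lap_posSemidef N hNs hNn)
  have hWs : W.IsSymm := by
    have := hWp.isHermitian
    rwa [Matrix.IsHermitian, Matrix.conjTranspose_eq_transpose_of_trivial] at this
  have hWdiag : ∀ u, W u u = Z u u + ∑ v, N u v := by
    intro u
    simp [hW, hN]
  have hWn : ∀ u v, 0 ≤ W u v := by
    intro u v
    by_cases huv : u = v
    · subst huv
      rw [hWdiag]
      exact add_nonneg (hnn _ _) (Finset.sum_nonneg fun v _ => hNn u v)
    · by_cases ha : G.Adj u v
      · simpa [hW, hN, huv, ha] using hnn u v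
      · simp [hW, hN, huv, ha]
  have hWz : ∀ u v, u ≠ v → ¬ G.Adj u v → W u v = 0 := by
    intro u v huv ha
    simp [hW, hN, huv, ha]
  have hWJ : frob (matJ n) W = frob (matJ n) Z := by
    rw [frob_matJ_eq, frob_matJ_eq]
    simp only [hW, Matrix.add_apply, Matrix.sub_apply, Finset.sum_add_distrib,
      Finset.sum_sub_distrib, Matrix.diagonal_apply, Finset.sum_ite_eq, Finset.mem_univ, if_true]
    ring
  have hWt : W.trace = frob (matJ n - G.adjMatrix ℝ) Z := by
    simp only [Matrix.trace, Matrix.diag, hWdiag, frob]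
    refine Finset.sum_congr rfl fun u _ => ?_
    have : Z u u = ∑ v, if u = v then Z u v else 0 := by simp
    rw [this, ← Finset.sum_add_distrib]
    refine Finset.sum_congr rfl fun v _ => ?_
    by_cases huv : u = v
    · subst huv
      simp [hN, matJ]
    · by_cases ha : G.Adj u v <;> simp [hN, matJ, huv, ha]
  rw [← hWt, ← hWJ]
  have hle := frob_matJ_le W hWs hWp
  have ht : 0 ≤ W.trace := Finset.sum_nonneg fun u _ => hWn u u
  rcases ht.eq_or_lt with h0 | hpos
  · rw [← h0] at hle ⊢
    simpa using hle
  · have hmem : frob (matJ n) (W.trace⁻¹ • W) ≤ chiVec G := by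
      refine le_csSup ?_ ?_
      · refine ⟨n, ?_⟩
        rintro x ⟨Y, hYs, -, hYp, hYt, -, rfl⟩
        have := frob_matJ_le Y hYs hYp
        rwa [hYt, mul_one] at this
      · refine ⟨W.trace⁻¹ • W, hWs.smul _, fun u v => ?_, hWp.smul (inv_nonneg.2 ht), ?_, ?_, rfl⟩
        · exact mul_nonneg (inv_nonneg.2 ht) (hWn u v)
        · rw [Matrix.trace_smul, smul_eq_mul, inv_mul_cancel₀ hpos.ne']
        · intro u v huv ha
          simp [hWz u v huv ha]
    have hsm : frob (matJ n) (W.trace⁻¹ • W) = W.trace⁻¹ * frob (matJ n) W := by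
      simp only [frob_matJ_eq, Matrix.smul_apply, smul_eq_mul, Finset.mul_sum]
    rw [hsm, inv_mul_le_iff₀ hpos] at hmem
    linarith
end

section
/- Let G be a finite simple graph, let μ ≥ 0 be a real number, and let X and Y be real positive semidefinite symmetric matrices with rows and columns indexed by the vertices of G. Suppose that XY = 0, that X_{uv} = Y_{uv} for every ordered pair (u,v) of vertices that is not an edge of G (including diagonal pairs u = v), and that ‖X‖² ≤ (1 + μ) · Σ_{(u,v) not an edge} X_{uv}². Then ‖X‖² ≤ μ · ‖Y‖². -/
open Matrix Finset BigOperators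

/-- **Lemma 3** (after Guo–Spiro). Let `X` and `Y` be real positive semidefinite symmetric
matrices indexed by the vertices of `G` with `XY = 0`, `X_{uv} = Y_{uv}` whenever `(u,v)` is
not an edge, and `‖X‖² ≤ (1 + μ) Σ_{(u,v) not an edge} X_{uv}²`. Then `‖X‖² ≤ μ ‖Y‖²`. -/
theorem normSq_le_mu_mul_normSq {n : ℕ} (G : SimpleGraph (Fin n)) [DecidableRel G.Adj]
    (μ : ℝ) (hμ : 0 ≤ μ) (X Y : Matrix (Fin n) (Fin n) ℝ) (hXs : X.IsSymm) (hYs : Y.IsSymm)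
    (hX : X.PosSemidef) (hY : Y.PosSemidef)
    (hXY : X * Y = 0) (hoff : ∀ u v, ¬ G.Adj u v → X u v = Y u v)
    (hbound : ∑ u, ∑ v, (X u v) ^ 2 ≤
      (1 + μ) * ∑ u, ∑ v, if ¬ G.Adj u v then (X u v) ^ 2 else 0) :
    ∑ u, ∑ v, (X u v) ^ 2 ≤ μ * ∑ u, ∑ v, (Y u v) ^ 2 := by
  have h0 : ∑ u, ∑ v, X u v * Y u v = 0 := by
    apply Finset.sum_eq_zero
    intro u _
    have h := congrFun (congrFun hXY u) u
    rw [Matrix.mul_apply] at h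
    simp only [Matrix.zero_apply] at h
    rw [← h]
    exact Finset.sum_congr rfl fun v _ => by rw [hYs.apply]
  simp only [← Fintype.sum_prod_type'] at *
  set N := ∑ p : Fin n × Fin n, if ¬ G.Adj p.1 p.2 then (X p.1 p.2) ^ 2 else 0 with hN
  set f : Fin n × Fin n → ℝ := fun p => if G.Adj p.1 p.2 then X p.1 p.2 else 0 with hf
  set g : Fin n × Fin n → ℝ := fun p => if G.Adj p.1 p.2 then Y p.1 p.2 else 0 with hg
  have hx : ∑ p : Fin n × Fin n, X p.1 p.2 ^ 2 = N + ∑ p, f p ^ 2 := by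
    rw [hN, ← Finset.sum_add_distrib]
    refine Finset.sum_congr rfl fun p _ => ?_
    by_cases h : G.Adj p.1 p.2 <;> simp [hf, h]
  have hy : ∑ p : Fin n × Fin n, Y p.1 p.2 ^ 2 = N + ∑ p, g p ^ 2 := by
    rw [hN, ← Finset.sum_add_distrib]
    refine Finset.sum_congr rfl fun p _ => ?_
    by_cases h : G.Adj p.1 p.2
    · simp [hg, h]
    · simp [hg, h, hoff _ _ h]
  have hxy : ∑ p : Fin n × Fin n, X p.1 p.2 * Y p.1 p.2 = N + ∑ p, f p * g p := by
    rw [hN, ← Finset.sum_add_distrib]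
    refine Finset.sum_congr rfl fun p _ => ?_
    by_cases h : G.Adj p.1 p.2
    · simp [hf, hg, h]
    · simp [hf, hg, h, hoff _ _ h, sq]
  have hcs := Finset.sum_mul_sq_le_sq_mul_sq Finset.univ f g
  have hNn : 0 ≤ N := Finset.sum_nonneg fun p _ => by split_ifs <;> positivity
  have hfn : 0 ≤ ∑ p, f p ^ 2 := by positivity
  have hgn : 0 ≤ ∑ p, g p ^ 2 := by positivity
  rw [hxy] at h0
  rw [hx] at hbound
  rw [hx, hy]
  clear_value N
  generalize ∑ p, f p ^ 2 = a at *
  generalize ∑ p, g p ^ 2 = b at *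
  have hc : ∑ p, f p * g p = -N := by linarith
  rw [hc] at hcs
  have ha : a ≤ μ * N := by linarith
  rcases hNn.eq_or_lt with h | h
  · subst h
    have : 0 ≤ μ * (0 + b) := by positivity
    linarith
  · have h1 : N * N ≤ N * (μ * b) := by nlinarith [mul_le_mul_of_nonneg_right ha hgn]
    have h2 := le_of_mul_le_mul_left h1 h
    linarith
end

section
/- Let G be a finite simple graph and let X and Y be real symmetric matrices indexed by the vertices of G such that XY = 0 and X_{uv} = Y_{uv} for every ordered pair (u,v) of vertices that is not an edge of G (including diagonal pairs u = v). Set d := Σ_{(u,v) not an edge} X_{uv}². Then (‖X‖² + ‖Y‖²) · d ≤ ‖X‖² · ‖Y‖². -/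
open Matrix Finset BigOperators

/-- If `X` and `Y` are real symmetric matrices indexed by the vertices of `G` with `XY = 0`
and `X_{uv} = Y_{uv}` whenever `(u,v)` is not an edge, then, setting
`d := Σ_{(u,v) not an edge} X_{uv}²`, we have `(‖X‖² + ‖Y‖²) d ≤ ‖X‖² ‖Y‖²`. -/
theorem sum_normSq_mul_d_le {n : ℕ} (G : SimpleGraph (Fin n)) [DecidableRel G.Adj]
    (X Y : Matrix (Fin n) (Fin n) ℝ) (hXs : X.IsSymm) (hYs : Y.IsSymm)
    (hXY : X * Y = 0) (hoff : ∀ u v, ¬ G.Adj u v → X u v = Y u v)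
    (d : ℝ) (hd : d = ∑ u, ∑ v, if ¬ G.Adj u v then (X u v) ^ 2 else 0) :
    (∑ u, ∑ v, (X u v) ^ 2 + ∑ u, ∑ v, (Y u v) ^ 2) * d ≤
      (∑ u, ∑ v, (X u v) ^ 2) * (∑ u, ∑ v, (Y u v) ^ 2) := by
  have h0 : ∑ u, ∑ v, X u v * Y u v = 0 := by
    refine Finset.sum_eq_zero fun u _ => ?_
    have h := congrFun (congrFun hXY u) u
    rw [Matrix.mul_apply] at h
    simp only [Matrix.zero_apply] at h
    rw [← h]
    exact Finset.sum_congr rfl fun v _ => by rw [hYs.apply]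
  have hcs := Finset.sum_mul_sq_le_sq_mul_sq (Finset.univ : Finset (Fin n × Fin n))
    (fun p => if G.Adj p.1 p.2 then X p.1 p.2 else 0)
    (fun p => if G.Adj p.1 p.2 then Y p.1 p.2 else 0)
  simp only [Fintype.sum_prod_type] at hcs
  have e1 : ∑ u, ∑ v, ((if G.Adj u v then X u v else 0) * (if G.Adj u v then Y u v else 0))
      = ∑ u, ∑ v, X u v * Y u v - d := by
    rw [hd]
    simp only [← Finset.sum_sub_distrib]
    refine Finset.sum_congr rfl fun u _ => Finset.sum_congr rfl fun v _ => ?_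
    by_cases h : G.Adj u v
    · simp [h]
    · simp [h, ← hoff u v h, sq]
  have e2 : ∑ u, ∑ v, (if G.Adj u v then X u v else 0) ^ 2
      = ∑ u, ∑ v, (X u v) ^ 2 - d := by
    rw [hd]
    simp only [← Finset.sum_sub_distrib]
    refine Finset.sum_congr rfl fun u _ => Finset.sum_congr rfl fun v _ => ?_
    by_cases h : G.Adj u v <;> simp [h]
  have e3 : ∑ u, ∑ v, (if G.Adj u v then Y u v else 0) ^ 2
      = ∑ u, ∑ v, (Y u v) ^ 2 - d := by
    rw [hd]
    simp only [← Finset.sum_sub_distrib]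
    refine Finset.sum_congr rfl fun u _ => Finset.sum_congr rfl fun v _ => ?_
    by_cases h : G.Adj u v
    · simp [h]
    · simp [h, ← hoff u v h]
  rw [e1, e2, e3, h0] at hcs
  nlinarith [hcs]
end

section
/- Let G be a finite simple graph with adjacency matrix A over the reals, let A⁺ denote the positive part of A obtained from its spectral decomposition, and let χvec(G) be the vector chromatic number of G. Then ‖A⁺‖² ≤ χvec(G) · Σ_{(u,v) not an edge} (A⁺)_{uv}², where the sum ranges over all ordered pairs (u,v) of vertices, including pairs with u = v, such that uv is not an edge of G. -/
open Matrix Finset BigOperators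

/-- Weighted Laplacians with nonnegative symmetric weights are positive semidefinite. -/
theorem lap_psd {n : ℕ} (W : Matrix (Fin n) (Fin n) ℝ) (hs : ∀ u v, W u v = W v u)
    (h0 : ∀ u v, 0 ≤ W u v) :
    (diagonal (fun u => ∑ v, W u v) - W).PosSemidef := by
  refine .of_dotProduct_mulVec_nonneg ?_ fun x => ?_
  · ext u v
    by_cases h : u = v
    · subst h; simp
    · have h' : v ≠ u := fun e => h e.symm
      simp [Matrix.conjTranspose_apply, h, h', hs u v]
  · have e1 : star x ⬝ᵥ ((diagonal (fun u => ∑ v, W u v) - W) *ᵥ x)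
        = ∑ u, ∑ v, (W u v * x u ^ 2 - W u v * (x u * x v)) := by
      rw [Matrix.sub_mulVec, dotProduct_sub]
      simp only [dotProduct, Matrix.mulVec, Finset.sum_sub_distrib,
        Pi.star_apply, star_trivial]
      congr 1
      · refine Finset.sum_congr rfl fun u _ => ?_
        have : (fun y => diagonal (fun u => ∑ v, W u v) u y * x y) =
          fun y => if u = y then (∑ v, W u v) * x y else 0 := by
          funext y
          by_cases h : u = y
          · subst h; simp
          · simp [h]
        rw [show (∑ y, diagonal (fun u => ∑ v, W u v) u y * x y) = (∑ v, W u v) * x u by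
          rw [this]; simp]
        rw [← Finset.sum_mul]; ring
      · refine Finset.sum_congr rfl fun u _ => ?_
        rw [Finset.mul_sum]
        exact Finset.sum_congr rfl fun v _ => by ring
    have e2 : ∑ u, ∑ v, (W u v * x u ^ 2 - W u v * (x u * x v))
        = ∑ u, ∑ v, (W u v * x v ^ 2 - W u v * (x u * x v)) := by
      rw [Finset.sum_comm]
      refine Finset.sum_congr rfl fun u _ => Finset.sum_congr rfl fun v _ => ?_
      rw [hs v u]; ring
    have e3 : 0 ≤ ∑ u, ∑ v, (W u v * x u ^ 2 - W u v * (x u * x v))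
        + ∑ u, ∑ v, (W u v * x v ^ 2 - W u v * (x u * x v)) := by
      simp only [← Finset.sum_add_distrib]
      refine Finset.sum_nonneg fun u _ => Finset.sum_nonneg fun v _ => ?_
      nlinarith [mul_nonneg (h0 u v) (sq_nonneg (x u - x v))]
    rw [e1]; linarith

/-- The sum of the entries of a positive semidefinite matrix is at most `n` times its trace. -/
theorem psd_sum_le {n : ℕ} (Z : Matrix (Fin n) (Fin n) ℝ) (hZ : Z.PosSemidef) :
    ∑ u, ∑ v, Z u v ≤ n * Z.trace := by
  have key : ∀ u v, 2 * Z u v ≤ Z u u + Z v v := by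
    intro u v
    have h := hZ.dotProduct_mulVec_nonneg (Pi.single u 1 - Pi.single v 1)
    have hs : Z v u = Z u v := by simpa using hZ.isHermitian.apply u v
    simp [Matrix.mulVec_sub, sub_dotProduct] at h
    linarith
  have h2 : ∑ u, ∑ v, 2 * Z u v ≤ ∑ u, ∑ v, (Z u u + Z v v) :=
    Finset.sum_le_sum fun u _ => Finset.sum_le_sum fun v _ => key u v
  simp only [← Finset.mul_sum, Finset.sum_add_distrib, Finset.sum_const, Finset.card_univ,
    Fintype.card_fin, nsmul_eq_mul] at h2
  simp only [Matrix.trace, Matrix.diag]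
  linarith

theorem Aplus_psd {n : ℕ} (G : SimpleGraph (Fin n)) [DecidableRel G.Adj] :
    (Aplus G).PosSemidef := by
  unfold Aplus
  refine PosSemidef.mul_mul_conjTranspose_same (PosSemidef.diagonal fun i => ?_) _
  simp only [Pi.zero_apply]
  split_ifs with h
  · exact h.le
  · exact le_rfl

/-- Any feasible matrix bounds `chiVec` from below, after scaling by the trace. -/
theorem sum_le_chiVec {n : ℕ} (G : SimpleGraph (Fin n)) [DecidableRel G.Adj]
    (Z : Matrix (Fin n) (Fin n) ℝ) (h0 : ∀ u v, 0 ≤ Z u v) (hZ : Z.PosSemidef)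
    (hE : ∀ u v, u ≠ v → ¬ G.Adj u v → Z u v = 0) :
    ∑ u, ∑ v, Z u v ≤ chiVec G * Z.trace := by
  have ht : 0 ≤ Z.trace := Finset.sum_nonneg fun u _ => h0 u u
  rcases ht.eq_or_lt with ht | ht
  · have := psd_sum_le Z hZ
    rw [← ht] at this ⊢
    simpa using this
  · rw [← div_le_iff₀ ht]
    refine le_csSup ⟨n, ?_⟩ ⟨(Z.trace)⁻¹ • Z, ?_, ?_, ?_, ?_, ?_, ?_⟩
    · rintro x ⟨Y, -, -, hY, hY1, -, rfl⟩
      have := psd_sum_le Y hY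
      rw [hY1] at this
      simpa [frob, matJ] using this
    · ext u v
      simpa using Or.inl (hZ.isHermitian.apply u v)
    · intro u v
      exact mul_nonneg (inv_nonneg.2 ht.le) (h0 u v)
    · exact hZ.smul (inv_nonneg.2 ht.le)
    · rw [Matrix.trace_smul, smul_eq_mul, inv_mul_cancel₀ ht.ne']
    · intro u v huv hn
      simp [hE u v huv hn]
    · simp [frob, matJ, ← Finset.mul_sum, div_eq_inv_mul]

/-- `‖A⁺‖² ≤ χvec(G) · Σ_{(u,v) not an edge} (A⁺)_{uv}²`, where the sum ranges over all ordered
pairs of vertices (including diagonal pairs) that are not edges of `G`. -/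
theorem normSq_Aplus_le_chiVec_mul_nonedge_sum {n : ℕ} (G : SimpleGraph (Fin n))
    [DecidableRel G.Adj] :
    ∑ u, ∑ v, (Aplus G u v) ^ 2 ≤
      chiVec G * ∑ u, ∑ v, if ¬ G.Adj u v then (Aplus G u v) ^ 2 else 0 := by
  have hP := Aplus_psd G
  have hQ : (Aplus G ⊙ Aplus G).PosSemidef := hP.hadamard hP
  have hPs : ∀ u v, Aplus G u v = Aplus G v u := fun u v => by
    simpa using hP.isHermitian.apply v u
  set W : Matrix (Fin n) (Fin n) ℝ :=
    Matrix.of fun u v => if u ≠ v ∧ ¬ G.Adj u v then (Aplus G u v) ^ 2 else 0 with hW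
  have hWa : ∀ u v, W u v = if u ≠ v ∧ ¬ G.Adj u v then (Aplus G u v) ^ 2 else 0 :=
    fun u v => rfl
  have hW0 : ∀ u v, 0 ≤ W u v := fun u v => by
    rw [hWa]; split_ifs <;> positivity
  have hWs : ∀ u v, W u v = W v u := fun u v => by
    rw [hWa, hWa, hPs u v]
    exact if_congr (by rw [G.adj_comm u v, ne_comm]) rfl rfl
  have hL := lap_psd W hWs hW0
  have hd : ∀ u, W u u = 0 := fun u => by simp [hWa]
  have hZ := hQ.add hL
  set Z := Aplus G ⊙ Aplus G + (diagonal (fun u => ∑ v, W u v) - W) with hZdef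
  have hZd : ∀ u, Z u u = ∑ v, (if ¬ G.Adj u v then (Aplus G u v) ^ 2 else 0) := fun u => by
    have h1 : ∀ v, (if ¬ G.Adj u v then (Aplus G u v) ^ 2 else 0)
        = (if u = v then (Aplus G u v) ^ 2 else 0) + W u v := fun v => by
      rw [hWa]
      by_cases h : u = v
      · subst h; simp
      · simp [h]
    rw [Finset.sum_congr rfl fun v _ => h1 v, Finset.sum_add_distrib, Finset.sum_ite_eq]
    simp [hZdef, hd, pow_two]
  have hZo : ∀ u v, u ≠ v → Z u v = if G.Adj u v then (Aplus G u v) ^ 2 else 0 := fun u v h => by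
    simp only [hZdef, Matrix.add_apply, Matrix.sub_apply, Matrix.hadamard_apply,
      Matrix.diagonal_apply_ne _ h, hWa]
    by_cases ha : G.Adj u v
    · simp [ha, pow_two]
    · simp [ha, h, pow_two]
  have hmain := sum_le_chiVec G Z ?_ hZ ?_
  · have ht : Z.trace = ∑ u, ∑ v, if ¬ G.Adj u v then (Aplus G u v) ^ 2 else 0 :=
      Finset.sum_congr rfl fun u _ => hZd u
    have hsum : ∑ u, ∑ v, Z u v = ∑ u, ∑ v, (Aplus G u v) ^ 2 := by
      refine Finset.sum_congr rfl fun u _ => ?_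
      simp [hZdef, Finset.sum_add_distrib, Matrix.diagonal_apply, pow_two]
    rw [ht, hsum] at hmain
    exact hmain
  · intro u v
    by_cases h : u = v
    · subst h
      rw [hZd]
      exact Finset.sum_nonneg fun v _ => by split_ifs <;> positivity
    · rw [hZo u v h]; split_ifs <;> positivity
  · intro u v h ha
    rw [hZo u v h, if_neg ha]
end

section
/- Let G be a finite simple graph with m edges and adjacency matrix A over the reals, and let χ(G) denote the chromatic number of G. Let s⁺ and s⁻ denote the sum of the squares of the positive and of the negative eigenvalues of A, respectively. Then min{s⁺, s⁻} ≥ 2m / χ(G). -/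
open Matrix Finset BigOperators

lemma aux_block {n k : ℕ} (C : Matrix (Fin n) (Fin n) ℝ) (hC : C.PosSemidef)
    (f : Fin n → Fin k) :
    ∑ u, ∑ v, C u v ^ 2 ≤ k * ∑ u, ∑ v, (if f u = f v then C u v ^ 2 else 0) := by
  obtain ⟨Y, hY⟩ : ∃ Y : Matrix (Fin n) (Fin n) ℝ, C = Yᴴ * Y := by
    open scoped MatrixOrder in
    exact CStarAlgebra.nonneg_iff_eq_star_mul_self.mp hC.nonneg
  have hc : ∀ u v, C u v = ∑ a, Y a u * Y a v := by
    intro u v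
    simp [hY, Matrix.mul_apply]
  have h2 : ∀ u v, C u v ^ 2 = ∑ a, ∑ b, (Y a u * Y b u) * (Y a v * Y b v) := by
    intro u v
    rw [hc, sq, Finset.sum_mul_sum]
    refine Finset.sum_congr rfl fun a _ => Finset.sum_congr rfl fun b _ => by ring
  set S : Fin k → Fin n → Fin n → ℝ := fun i a b =>
    ∑ u, if f u = i then Y a u * Y b u else 0 with hS
  have hL : ∑ u, ∑ v, C u v ^ 2 = ∑ a, ∑ b, (∑ i, S i a b) ^ 2 := by
    have : ∀ a b, ∑ i, S i a b = ∑ u, Y a u * Y b u := by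
      intro a b
      simp only [hS]
      rw [Finset.sum_comm]
      simp
    simp only [this, h2, sq, Finset.sum_mul_sum]
    calc _ = ∑ u, ∑ a, ∑ v, ∑ b, (Y a u * Y b u) * (Y a v * Y b v) :=
          Finset.sum_congr rfl fun u _ => Finset.sum_comm
      _ = ∑ a, ∑ u, ∑ v, ∑ b, (Y a u * Y b u) * (Y a v * Y b v) := Finset.sum_comm
      _ = ∑ a, ∑ u, ∑ b, ∑ v, (Y a u * Y b u) * (Y a v * Y b v) :=
          Finset.sum_congr rfl fun a _ => Finset.sum_congr rfl fun u _ => Finset.sum_comm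
      _ = _ := Finset.sum_congr rfl fun a _ => Finset.sum_comm
  have hR : ∑ u, ∑ v, (if f u = f v then C u v ^ 2 else 0)
      = ∑ a, ∑ b, ∑ i, (S i a b) ^ 2 := by
    have : ∀ a b, ∑ i, (S i a b) ^ 2 =
        ∑ u, ∑ v, if f u = f v then (Y a u * Y b u) * (Y a v * Y b v) else 0 := by
      intro a b
      simp only [hS, sq, Finset.sum_mul_sum]
      rw [Finset.sum_comm]
      refine Finset.sum_congr rfl fun u _ => ?_
      rw [Finset.sum_comm]
      refine Finset.sum_congr rfl fun v _ => ?_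
      rw [Finset.sum_eq_single (f u)]
      · by_cases h : f u = f v
        · simp [h]
        · simp [h, Ne.symm h]
      · intro i _ hi
        simp [Ne.symm hi]
      · simp
    simp only [this]
    have h3 : ∀ u v, (if f u = f v then C u v ^ 2 else 0) = ∑ a, ∑ b,
        if f u = f v then (Y a u * Y b u) * (Y a v * Y b v) else 0 := by
      intro u v
      split_ifs
      · exact h2 u v
      · simp
    simp only [h3]
    generalize hF : (fun u v a b => if f u = f v then (Y a u * Y b u) * (Y a v * Y b v) else 0) = F
    have hF' : ∀ u v a b, (if f u = f v then (Y a u * Y b u) * (Y a v * Y b v) else 0)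
        = F u v a b := by
      intro u v a b
      rw [← hF]
    simp only [hF']
    calc _ = ∑ u, ∑ a, ∑ v, ∑ b, F u v a b :=
          Finset.sum_congr rfl fun u _ => Finset.sum_comm
      _ = ∑ a, ∑ u, ∑ v, ∑ b, F u v a b := Finset.sum_comm
      _ = ∑ a, ∑ u, ∑ b, ∑ v, F u v a b :=
          Finset.sum_congr rfl fun a _ => Finset.sum_congr rfl fun u _ => Finset.sum_comm
      _ = _ := Finset.sum_congr rfl fun a _ => Finset.sum_comm
  rw [hL, hR, Finset.mul_sum]
  refine Finset.sum_le_sum fun a _ => ?_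
  rw [Finset.mul_sum]
  refine Finset.sum_le_sum fun b _ => ?_
  simpa using sq_sum_le_card_mul_sum_sq (s := (Finset.univ : Finset (Fin k)))
    (f := fun i => S i a b)

lemma aux_main {n k : ℕ} (B C : Matrix (Fin n) (Fin n) ℝ)
    (hC : C.PosSemidef) (f : Fin n → Fin k)
    (hBC : ∀ u v, f u = f v → B u v = C u v) (h0 : ∑ u, ∑ v, B u v * C u v = 0) :
    ∑ u, ∑ v, (B u v - C u v) ^ 2 ≤ k * ∑ u, ∑ v, B u v ^ 2 := by
  have hblk := aux_block C hC f
  set t := ∑ u, ∑ v, (if f u = f v then C u v ^ 2 else 0) with ht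
  set oB := ∑ u, ∑ v, (if f u = f v then 0 else B u v ^ 2) with hoB
  set oC := ∑ u, ∑ v, (if f u = f v then 0 else C u v ^ 2) with hoC
  set oX := ∑ u, ∑ v, (if f u = f v then 0 else B u v * C u v) with hoX
  have e1 : ∑ u, ∑ v, B u v ^ 2 = t + oB := by
    simp only [ht, hoB, ← Finset.sum_add_distrib]
    refine Finset.sum_congr rfl fun u _ => Finset.sum_congr rfl fun v _ => ?_
    split_ifs with h
    · rw [hBC u v h]; ring
    · ring
  have e2 : ∑ u, ∑ v, C u v ^ 2 = t + oC := by
    simp only [ht, hoC, ← Finset.sum_add_distrib]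
    refine Finset.sum_congr rfl fun u _ => Finset.sum_congr rfl fun v _ => ?_
    split_ifs with h <;> ring
  have e3 : ∑ u, ∑ v, B u v * C u v = t + oX := by
    simp only [ht, hoX, ← Finset.sum_add_distrib]
    refine Finset.sum_congr rfl fun u _ => Finset.sum_congr rfl fun v _ => ?_
    split_ifs with h
    · rw [hBC u v h]; ring
    · ring
  have e4 : ∑ u, ∑ v, (B u v - C u v) ^ 2 =
      ∑ u, ∑ v, B u v ^ 2 + ∑ u, ∑ v, C u v ^ 2 - 2 * ∑ u, ∑ v, B u v * C u v := by
    simp only [Finset.mul_sum, ← Finset.sum_add_distrib, ← Finset.sum_sub_distrib]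
    refine Finset.sum_congr rfl fun u _ => Finset.sum_congr rfl fun v _ => by ring
  have cs : oX ^ 2 ≤ oB * oC := by
    have := Finset.sum_mul_sq_le_sq_mul_sq (Finset.univ : Finset (Fin n × Fin n))
      (fun p => if f p.1 = f p.2 then 0 else B p.1 p.2)
      (fun p => if f p.1 = f p.2 then 0 else C p.1 p.2)
    simp only [Fintype.sum_prod_type] at this
    have q1 : oX = ∑ u, ∑ v, (if f u = f v then 0 else B u v) *
        (if f u = f v then 0 else C u v) :=
      Finset.sum_congr rfl fun u _ => Finset.sum_congr rfl fun v _ => by split_ifs <;> ring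
    have q2 : oB = ∑ u, ∑ v, (if f u = f v then 0 else B u v) ^ 2 :=
      Finset.sum_congr rfl fun u _ => Finset.sum_congr rfl fun v _ => by split_ifs <;> ring
    have q3 : oC = ∑ u, ∑ v, (if f u = f v then 0 else C u v) ^ 2 :=
      Finset.sum_congr rfl fun u _ => Finset.sum_congr rfl fun v _ => by split_ifs <;> ring
    rw [q1, q2, q3]
    exact this
  have ht0 : 0 ≤ t := Finset.sum_nonneg fun u _ => Finset.sum_nonneg fun v _ => by
    split_ifs <;> positivity
  have hB0 : 0 ≤ oB := Finset.sum_nonneg fun u _ => Finset.sum_nonneg fun v _ => by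
    split_ifs <;> positivity
  have hC0 : 0 ≤ oC := Finset.sum_nonneg fun u _ => Finset.sum_nonneg fun v _ => by
    split_ifs <;> positivity
  have hk0 : k = 0 ∨ (1 : ℝ) ≤ k := by
    rcases Nat.eq_zero_or_pos k with h | h
    · exact Or.inl h
    · exact Or.inr (by exact_mod_cast h)
  rw [e4, h0, e1, e2]
  rw [e2] at hblk
  rw [e3] at h0
  have hx : oX = -t := by linarith
  rw [hx] at cs
  rcases hk0 with h | h
  · subst h
    have : IsEmpty (Fin n) := ⟨fun i => (f i).elim0⟩
    simp [ht, hoB, hoC]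
  -- the key inequality: t ≤ (k-1) oB
  have key : t ≤ (k - 1) * oB := by
    rcases ht0.eq_or_lt with h' | h'
    · rw [← h']; exact mul_nonneg (by linarith) hB0
    · have h5 : oB * oC ≤ oB * ((k - 1) * t) := mul_le_mul_of_nonneg_left (by linarith) hB0
      have h6 : t * t ≤ ((k - 1) * oB) * t := by nlinarith
      exact le_of_mul_le_mul_right h6 h'
  nlinarith

lemma aux_conj {n : ℕ} (G : SimpleGraph (Fin n)) [DecidableRel G.Adj] (d e : Fin n → ℝ) :
    (((adjHerm G).eigenvectorUnitary : Matrix (Fin n) (Fin n) ℝ) * diagonal d *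
      star ((adjHerm G).eigenvectorUnitary : Matrix (Fin n) (Fin n) ℝ) *
    (((adjHerm G).eigenvectorUnitary : Matrix (Fin n) (Fin n) ℝ) * diagonal e *
      star ((adjHerm G).eigenvectorUnitary : Matrix (Fin n) (Fin n) ℝ))).trace
      = ∑ i, d i * e i := by
  set U := ((adjHerm G).eigenvectorUnitary : Matrix (Fin n) (Fin n) ℝ) with hU
  have h1 : star U * U = 1 := Unitary.coe_star_mul_self _
  have : U * diagonal d * star U * (U * diagonal e * star U)
      = U * (diagonal d * diagonal e) * star U := by
    calc _ = U * diagonal d * (star U * U) * diagonal e * star U := by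
          simp only [Matrix.mul_assoc]
      _ = _ := by rw [h1]; simp only [Matrix.mul_assoc, Matrix.mul_one, Matrix.one_mul]
  rw [this, Matrix.trace_mul_comm, ← Matrix.mul_assoc, h1, Matrix.one_mul,
    Matrix.diagonal_mul_diagonal, Matrix.trace_diagonal]

lemma aux_frob {n : ℕ} (B C : Matrix (Fin n) (Fin n) ℝ) (hC : C.PosSemidef) :
    ∑ u, ∑ v, B u v * C u v = (B * C).trace := by
  simp only [Matrix.trace, Matrix.diag, Matrix.mul_apply]
  refine Finset.sum_congr rfl fun u _ => Finset.sum_congr rfl fun v _ => ?_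
  have := hC.isHermitian.apply u v
  simp at this
  rw [this]

lemma aux_psd {n : ℕ} (G : SimpleGraph (Fin n)) [DecidableRel G.Adj] (d : Fin n → ℝ)
    (hd : ∀ i, 0 ≤ d i) :
    (((adjHerm G).eigenvectorUnitary : Matrix (Fin n) (Fin n) ℝ) * diagonal d *
      star ((adjHerm G).eigenvectorUnitary : Matrix (Fin n) (Fin n) ℝ)).PosSemidef :=
  (Matrix.PosSemidef.diagonal hd).mul_mul_conjTranspose_same _

/-- (Ando–Lin) For every graph `G` with `m` edges and chromatic number `χ(G)`,
`min {s⁺, s⁻} ≥ 2m / χ(G)`. -/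
theorem min_sum_squares_ge_two_m_div_chromaticNumber {n : ℕ} (G : SimpleGraph (Fin n))
    [DecidableRel G.Adj] :
    min (sPlus G) (sMinus G) ≥
      2 * (G.edgeFinset.card : ℝ) / (G.chromaticNumber.toNat : ℝ) := by
  have hP : (Aplus G).PosSemidef := aux_psd G _ fun i => by split_ifs <;> linarith
  have hM : (Aminus G).PosSemidef := aux_psd G _ fun i => by split_ifs <;> linarith
  have hPM : ∑ u, ∑ v, Aplus G u v * Aminus G u v = 0 := by
    rw [aux_frob _ _ hM, Aplus, Aminus, aux_conj]
    refine Finset.sum_eq_zero fun i _ => ?_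
    split_ifs <;> first | linarith | simp
  have hPP : ∑ u, ∑ v, Aplus G u v ^ 2 = sPlus G := by
    simp only [sq]
    rw [aux_frob _ _ hP, Aplus, aux_conj, sPlus]
    refine Finset.sum_congr rfl fun i _ => ?_
    split_ifs <;> ring
  have hMM : ∑ u, ∑ v, Aminus G u v ^ 2 = sMinus G := by
    simp only [sq]
    rw [aux_frob _ _ hM, Aminus, aux_conj, sMinus]
    refine Finset.sum_congr rfl fun i _ => ?_
    split_ifs <;> ring
  have hA : Aplus G - Aminus G = G.adjMatrix ℝ := by
    have hs := (adjHerm G).spectral_theorem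
    rw [Unitary.conjStarAlgAut_apply] at hs
    rw [hs, Aplus, Aminus, ← Matrix.sub_mul, ← Matrix.mul_sub, Matrix.diagonal_sub]
    congr 3
    funext i
    simp only [Function.comp, RCLike.ofReal_real_eq_id, id]
    split_ifs <;> linarith
  have hA' : ∀ u v, Aplus G u v - Aminus G u v = if G.Adj u v then 1 else 0 := by
    intro u v
    rw [← Matrix.sub_apply, hA, SimpleGraph.adjMatrix_apply]
  have h2m : ∑ u, ∑ v, (Aplus G u v - Aminus G u v) ^ 2 = 2 * (G.edgeFinset.card : ℝ) := by
    have := G.sum_degrees_eq_twice_card_edges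
    have h' : (∑ u, (G.degree u : ℝ)) = 2 * (G.edgeFinset.card : ℝ) := by exact_mod_cast this
    rw [← h']
    refine Finset.sum_congr rfl fun u _ => ?_
    simp only [hA', ite_pow, one_pow, ne_eq, OfNat.ofNat_ne_zero, not_false_eq_true, zero_pow]
    rw [Finset.sum_boole, ← SimpleGraph.card_neighborFinset_eq_degree,
      SimpleGraph.neighborFinset_eq_filter]
  have hp0 : 0 ≤ sPlus G := by rw [← hPP]; positivity
  have hm0 : 0 ≤ sMinus G := by rw [← hMM]; positivity
  have hcol : G.Colorable G.chromaticNumber.toNat :=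
    SimpleGraph.colorable_chromaticNumber G.colorable_of_fintype
  obtain ⟨c⟩ := hcol
  set k := G.chromaticNumber.toNat
  have hc : ∀ u v, c u = c v → Aplus G u v = Aminus G u v := by
    intro u v h
    have h1 : ¬ G.Adj u v := fun h' => c.valid h' h
    have h2 := hA' u v
    rw [if_neg h1] at h2
    linarith
  have r1 := aux_main (Aplus G) (Aminus G) hM c hc hPM
  have r2 := aux_main (Aminus G) (Aplus G) hP c (fun u v h => (hc u v h).symm)
    (by simpa only [mul_comm] using hPM)
  have hsw : ∑ u, ∑ v, (Aminus G u v - Aplus G u v) ^ 2 =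
      ∑ u, ∑ v, (Aplus G u v - Aminus G u v) ^ 2 :=
    Finset.sum_congr rfl fun u _ => Finset.sum_congr rfl fun v _ => by ring
  rw [hsw, h2m, hMM] at r2
  rw [h2m, hPP] at r1
  rcases Nat.eq_zero_or_pos k with h | h
  · rw [h]
    simp [hp0, hm0]
  · have hk : (0 : ℝ) < k := by exact_mod_cast h
    refine le_min ?_ ?_
    · rw [div_le_iff₀ hk]; linarith
    · rw [div_le_iff₀ hk]; linarith
end
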